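/- Let n ≥ 0 and assume the hypotheses guaranteeing that Q_n is Hilbert–Schmidt (so that for every g ∈ ℓ²_{w'} the defining series of Q_n g converges absolutely for each k). Then D_n Q_n g = g for every g ∈ ℓ²_{w'}; that is, β(k+n)(Q_n g)(k) − β(k)(μ(k+1)/μ(k))(Q_n g)(k+1) = g(k) for all k ≥ 0. In particular Ran(Q_n) ⊆ dom(D_n) and D_n : dom(D_n) → ℓ²_{w'} is surjective. -/

import Mathlib

/-- The difference operator `D_n` on sequences:
`(D_n f)(k) = β(k+n) f(k) − β(k) (μ(k+1)/μ(k)) f(k+1)`. -/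
noncomputable def Dn (β μ : ℕ → ℂ) (n : ℕ) (f : ℕ → ℂ) (k : ℕ) : ℂ :=
  β (k + n) * f k - β k * (μ (k + 1) / μ k) * f (k + 1)

/-- The integral kernel of the operator `Q_n`. -/
noncomputable def Qker (β μ : ℕ → ℂ) (n : ℕ) (k j : ℕ) : ℂ :=
  (∏ i ∈ Finset.range n, β (k + i)) / (∏ i ∈ Finset.range (n + 1), β (j + i)) *
    (μ j / μ k)

/-- The operator `Q_n`: `(Q_n g)(k) = Σ_{j=k}^∞ K_n(k,j) g(j)`. -/
noncomputable def Qop (β μ : ℕ → ℂ) (n : ℕ) (g : ℕ → ℂ) (k : ℕ) : ℂ :=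
  ∑' j : ℕ, if k ≤ j then Qker β μ n k j * g j else 0

/-- Membership in the weighted space `ℓ²_w`: `Σ_k w(k) |f(k)|² < ∞`. -/
def MemL2 (w : ℕ → ℝ) (f : ℕ → ℂ) : Prop :=
  Summable fun k => w k * ‖f k‖ ^ 2

/-!
Extended by zero below the diagonal, the kernel of `Q_n` is the Green's function of `D_n`: as a
function of `k`, the entry in column `j` solves the homogeneous equation away from `k = j`, and its
diagonal value `1 / β (j + n)` makes `D_n` send it to the Kronecker delta at `j`. Since `D_n` is a
two-term operator, it may be applied to `∑' j, K_n(k, j) g(j)` term by term as soon as these series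
converge, and this gives `D_n Q_n g = g`.

Convergence, and `Q_n g ∈ ℓ²_w`, come from the Cauchy–Schwarz inequality applied to each row of the
kernel, which is Hilbert–Schmidt from `ℓ²_{w'}` to `ℓ²_w` because
`|K_n(k, j)| ≤ (M / c) (j + 1)⁻¹ |μ(j) / μ(k)|` for `k ≤ j`.
-/

theorem summable_and_sq_tsum_le_tsum_mul_tsum_of_sq_le_mul {ι : Type*} {r a b : ι → ℝ}
    (hr : ∀ i, 0 ≤ r i) (ha : ∀ i, 0 ≤ a i) (hb : ∀ i, 0 ≤ b i)
    (hrab : ∀ i, r i ^ 2 ≤ a i * b i) (hsa : Summable a) (hsb : Summable b) :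
    Summable r ∧ (∑' i, r i) ^ 2 ≤ (∑' i, a i) * ∑' i, b i := by
  have hfinite (s : Finset ι) : (∑ i ∈ s, r i) ^ 2 ≤ (∑' i, a i) * ∑' i, b i :=
    calc (∑ i ∈ s, r i) ^ 2
        ≤ (∑ i ∈ s, a i) * ∑ i ∈ s, b i :=
          s.sum_sq_le_sum_mul_sum_of_sq_le_mul (fun i _ => ha i) (fun i _ => hb i)
            fun i _ => hrab i
      _ ≤ (∑' i, a i) * ∑' i, b i :=
          mul_le_mul (hsa.sum_le_tsum s fun i _ => ha i) (hsb.sum_le_tsum s fun i _ => hb i)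
            (Finset.sum_nonneg fun i _ => hb i) (tsum_nonneg ha)
  have hsr : Summable r := summable_of_sum_le hr fun s => Real.le_sqrt_of_sq_le (hfinite s)
  exact ⟨hsr, le_of_tendsto (hsr.hasSum.pow 2) (.of_forall hfinite)⟩

/-- `A` is the kernel of a Hilbert–Schmidt operator from `ℓ²_{w'}` to `ℓ²_w`. The series is the
squared Hilbert–Schmidt norm computed in the orthonormal basis `w'(j)^{-1/2} e_j` of `ℓ²_{w'}`. -/
def IsHilbertSchmidtKernel {ι κ E : Type*} [Norm E] (w : ι → ℝ) (w' : κ → ℝ)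
    (A : ι → κ → E) : Prop :=
  Summable fun p : ι × κ => w p.1 * (‖A p.1 p.2‖ ^ 2 / w' p.2)

namespace IsHilbertSchmidtKernel

variable {ι κ E R : Type*} {w : ι → ℝ} {w' : κ → ℝ}

theorem summable_row [Norm E] {A : ι → κ → E} (hA : IsHilbertSchmidtKernel w w' A) {k : ι}
    (hk : w k ≠ 0) : Summable fun j => ‖A k j‖ ^ 2 / w' j :=
  (summable_mul_left_iff hk).1 (hA.prod_factor k)

theorem summable_mul_tsum_row [Norm E] {A : ι → κ → E} (hA : IsHilbertSchmidtKernel w w' A) :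
    Summable fun k => w k * ∑' j, ‖A k j‖ ^ 2 / w' j := by
  simpa only [tsum_mul_left] using hA.prod

variable [NormedRing R] {A : ι → κ → R} {g : κ → R}

theorem summable_norm_mul_and_sq_tsum_le (hA : IsHilbertSchmidtKernel w w' A)
    (hw' : ∀ j, 0 < w' j) (hg : Summable fun j => w' j * ‖g j‖ ^ 2) {k : ι} (hk : w k ≠ 0) :
    (Summable fun j => ‖A k j * g j‖) ∧
      (∑' j, ‖A k j * g j‖) ^ 2 ≤ (∑' j, ‖A k j‖ ^ 2 / w' j) * ∑' j, w' j * ‖g j‖ ^ 2 := by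
  refine summable_and_sq_tsum_le_tsum_mul_tsum_of_sq_le_mul (fun j => norm_nonneg _)
    (fun j => div_nonneg (sq_nonneg _) (hw' j).le)
    (fun j => mul_nonneg (hw' j).le (sq_nonneg _)) (fun j => ?_) (hA.summable_row hk) hg
  calc ‖A k j * g j‖ ^ 2
      ≤ (‖A k j‖ * ‖g j‖) ^ 2 := by gcongr; exact norm_mul_le _ _
    _ = ‖A k j‖ ^ 2 / w' j * (w' j * ‖g j‖ ^ 2) := by
      rw [← mul_assoc, div_mul_cancel₀ _ (hw' j).ne', mul_pow]

theorem summable_mul_sq_norm_tsum (hA : IsHilbertSchmidtKernel w w' A) (hw : ∀ k, 0 < w k)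
    (hw' : ∀ j, 0 < w' j) (hg : Summable fun j => w' j * ‖g j‖ ^ 2) :
    Summable fun k => w k * ‖∑' j, A k j * g j‖ ^ 2 := by
  refine .of_nonneg_of_le (fun k => mul_nonneg (hw k).le (sq_nonneg _)) (fun k => ?_)
    (hA.summable_mul_tsum_row.mul_right (∑' j, w' j * ‖g j‖ ^ 2))
  obtain ⟨hrow, hle⟩ := hA.summable_norm_mul_and_sq_tsum_le hw' hg (hw k).ne'
  calc w k * ‖∑' j, A k j * g j‖ ^ 2
      ≤ w k * (∑' j, ‖A k j * g j‖) ^ 2 := by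
        have := (hw k).le
        gcongr
        exact norm_tsum_le_tsum_norm hrow
    _ ≤ w k * ((∑' j, ‖A k j‖ ^ 2 / w' j) * ∑' j, w' j * ‖g j‖ ^ 2) :=
        mul_le_mul_of_nonneg_left hle (hw k).le
    _ = w k * (∑' j, ‖A k j‖ ^ 2 / w' j) * ∑' j, w' j * ‖g j‖ ^ 2 := (mul_assoc _ _ _).symm

end IsHilbertSchmidtKernel

section QkerUpper

/-- The kernel of `Q_n` extended by zero below the diagonal, so that `Q_n` becomes an unrestricted
sum over all `j`. -/
noncomputable def QkerUpper (β μ : ℕ → ℂ) (n k j : ℕ) : ℂ :=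
  if k ≤ j then Qker β μ n k j else 0

variable {β μ : ℕ → ℂ}

theorem QkerUpper_mul (n k j : ℕ) (z : ℂ) :
    QkerUpper β μ n k j * z = if k ≤ j then Qker β μ n k j * z else 0 :=
  ite_zero_mul _ _ _

theorem norm_QkerUpper_mul (n k j : ℕ) (z : ℂ) :
    ‖QkerUpper β μ n k j * z‖ = if k ≤ j then ‖Qker β μ n k j * z‖ else 0 := by
  rw [QkerUpper_mul, apply_ite norm, norm_zero]

theorem Qop_eq_tsum_QkerUpper_mul (n : ℕ) (g : ℕ → ℂ) :
    Qop β μ n g = fun k => ∑' j, QkerUpper β μ n k j * g j :=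
  funext fun k => tsum_congr fun j => (QkerUpper_mul n k j (g j)).symm

theorem mul_Qker_succ {k : ℕ} (hμ : μ (k + 1) ≠ 0) (n j : ℕ) :
    β k * (μ (k + 1) / μ k) * Qker β μ n (k + 1) j = β (k + n) * Qker β μ n k j := by
  have hβ_shift : β k * ∏ i ∈ Finset.range n, β (k + 1 + i) =
      β (k + n) * ∏ i ∈ Finset.range n, β (k + i) := by
    rw [mul_comm (β (k + n)), ← Finset.prod_range_succ (fun i => β (k + i)),
      Finset.prod_range_succ', mul_comm]
    simp only [add_zero, add_assoc, add_comm 1]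
  have hμ_telescope : μ (k + 1) / μ k * (μ j / μ (k + 1)) = μ j / μ k := by
    rw [mul_comm, div_mul_div_cancel₀ hμ]
  calc β k * (μ (k + 1) / μ k) * Qker β μ n (k + 1) j
      = β k * (∏ i ∈ Finset.range n, β (k + 1 + i)) / (∏ i ∈ Finset.range (n + 1), β (j + i)) *
          (μ (k + 1) / μ k * (μ j / μ (k + 1))) := by rw [Qker]; ring
    _ = β (k + n) * Qker β μ n k j := by rw [hβ_shift, hμ_telescope, Qker]; ring

theorem mul_Qker_self (hβ : ∀ k, β k ≠ 0) {k : ℕ} (hμ : μ k ≠ 0) (n : ℕ) :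
    β (k + n) * Qker β μ n k k = 1 := by
  have hprod : ∏ i ∈ Finset.range n, β (k + i) ≠ 0 := Finset.prod_ne_zero_iff.2 fun i _ => hβ _
  rw [Qker, Finset.prod_range_succ, div_self hμ, mul_one, div_mul_cancel_left₀ hprod,
    mul_inv_cancel₀ (hβ _)]

theorem Dn_QkerUpper (hβ : ∀ k, β k ≠ 0) (hμ : ∀ k, μ k ≠ 0) (n k j : ℕ) :
    Dn β μ n (fun i => QkerUpper β μ n i j) k = if j = k then 1 else 0 := by
  simp only [Dn, QkerUpper]
  rcases lt_trichotomy k j with hkj | rfl | hjk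
  · rw [if_pos hkj.le, if_pos (Nat.succ_le_of_lt hkj), if_neg hkj.ne', mul_Qker_succ (hμ _),
      sub_self]
  · rw [if_pos le_rfl, if_neg k.lt_succ_self.not_ge, if_pos rfl, mul_Qker_self hβ (hμ k),
      mul_zero, sub_zero]
  · rw [if_neg hjk.not_ge, if_neg (hjk.trans k.lt_succ_self).not_ge, if_neg hjk.ne, mul_zero,
      mul_zero, sub_zero]

theorem Dn_tsum_mul {κ : Type*} {A : ℕ → κ → ℂ} {g : κ → ℂ}
    (hs : ∀ k, Summable fun j => A k j * g j) (n k : ℕ) :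
    Dn β μ n (fun i => ∑' j, A i j * g j) k = ∑' j, Dn β μ n (fun i => A i j) k * g j := by
  simp only [Dn]
  rw [← tsum_mul_left, ← tsum_mul_left, ← ((hs k).mul_left _).tsum_sub ((hs (k + 1)).mul_left _)]
  exact tsum_congr fun j => by ring

theorem Dn_Qop (hβ : ∀ k, β k ≠ 0) (hμ : ∀ k, μ k ≠ 0) {n : ℕ} {g : ℕ → ℂ}
    (hs : ∀ k, Summable fun j => QkerUpper β μ n k j * g j) :
    Dn β μ n (Qop β μ n g) = g := by
  funext k
  rw [Qop_eq_tsum_QkerUpper_mul, Dn_tsum_mul hs]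
  simp only [Dn_QkerUpper hβ hμ, ite_mul, one_mul, zero_mul, tsum_ite_eq]

theorem norm_Qker_le (hβ : ∀ k, β k ≠ 0) {M c : ℝ} (hc : 0 < c) {n k j : ℕ}
    (hprod : ‖∏ i ∈ Finset.range n, β (k + i)‖ ≤ M * ‖∏ i ∈ Finset.range n, β (j + i)‖)
    (hlow : c * (1 + j) ≤ ‖β (j + n)‖) :
    ‖Qker β μ n k j‖ ≤ M / c * (((j : ℝ) + 1)⁻¹ * ‖μ j / μ k‖) := by
  have hP : 0 < ‖∏ i ∈ Finset.range n, β (j + i)‖ :=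
    norm_pos_iff.2 (Finset.prod_ne_zero_iff.2 fun i _ => hβ _)
  have hratio : ‖∏ i ∈ Finset.range n, β (k + i)‖ / ‖∏ i ∈ Finset.range n, β (j + i)‖ ≤ M :=
    (div_le_iff₀ hP).2 hprod
  have hM : 0 ≤ M := le_trans (by positivity) hratio
  calc ‖Qker β μ n k j‖
      = ‖∏ i ∈ Finset.range n, β (k + i)‖ / ‖∏ i ∈ Finset.range n, β (j + i)‖ /
          ‖β (j + n)‖ * ‖μ j / μ k‖ := by
        rw [Qker, Finset.prod_range_succ, norm_mul, norm_div, norm_mul, div_div]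
    _ ≤ M / (c * (1 + j)) * ‖μ j / μ k‖ := by gcongr
    _ = M / c * (((j : ℝ) + 1)⁻¹ * ‖μ j / μ k‖) := by
        rw [← div_div, div_eq_mul_inv (M / c), mul_assoc, add_comm]

theorem norm_prod_shift_le {M : ℝ} (hβ : ∀ k, β k ≠ 0)
    (hM : ∀ k j m : ℕ, k ≤ j →
      ‖∏ i ∈ Finset.range (m + 1), β (k + i)‖ ≤ M * ‖∏ i ∈ Finset.range (m + 1), β (j + i)‖)
    (n : ℕ) {k j : ℕ} (hkj : k ≤ j) :
    ‖∏ i ∈ Finset.range n, β (k + i)‖ ≤ M * ‖∏ i ∈ Finset.range n, β (j + i)‖ := by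
  cases n with
  | zero =>
    have hM_one : 1 ≤ M :=
      (le_mul_iff_one_le_left (norm_pos_iff.2 (by simpa using hβ k))).1 (hM k k 0 le_rfl)
    simpa using hM_one
  | succ m => exact hM k j m hkj

theorem isHilbertSchmidtKernel_QkerUpper {w w' : ℕ → ℝ} (hw : ∀ k, 0 ≤ w k)
    (hw' : ∀ k, 0 ≤ w' k) (hβ : ∀ k, β k ≠ 0) {M c : ℝ} (hc : 0 < c) {n : ℕ}
    (hprod : ∀ k j, k ≤ j →
      ‖∏ i ∈ Finset.range n, β (k + i)‖ ≤ M * ‖∏ i ∈ Finset.range n, β (j + i)‖)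
    (hβlow : ∀ k : ℕ, c * (1 + k) ≤ ‖β k‖)
    (hsum : Summable fun p : ℕ × ℕ =>
      ((max p.2 p.1 : ℝ) + 1)⁻¹ ^ 2 * ‖μ p.2 / μ p.1‖ ^ 2 * (w p.1 / w' p.2)) :
    IsHilbertSchmidtKernel w w' (QkerUpper β μ n) := by
  refine .of_nonneg_of_le
    (fun p => mul_nonneg (hw _) (div_nonneg (sq_nonneg _) (hw' _))) (fun ⟨k, j⟩ => ?_)
    (hsum.mul_left ((M / c) ^ 2))
  have hwkj : 0 ≤ w k / w' j := div_nonneg (hw k) (hw' j)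
  have hlow : c * (1 + j) ≤ ‖β (j + n)‖ :=
    calc c * (1 + j) ≤ c * (1 + (j + n : ℕ)) := by gcongr; exact Nat.le_add_right j n
      _ ≤ ‖β (j + n)‖ := hβlow (j + n)
  have hbound : ‖QkerUpper β μ n k j‖ ≤ M / c * ((max (j : ℝ) k + 1)⁻¹ * ‖μ j / μ k‖) := by
    have hM : 0 ≤ M := nonneg_of_mul_nonneg_left ((norm_nonneg _).trans (hprod k k le_rfl))
      (norm_pos_iff.2 (Finset.prod_ne_zero_iff.2 fun i _ => hβ (k + i)))
    rw [QkerUpper]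
    split_ifs with hkj
    · rw [max_eq_left (Nat.cast_le.2 hkj)]
      exact norm_Qker_le hβ hc (hprod k j hkj) hlow
    · rw [norm_zero]
      positivity
  calc w k * (‖QkerUpper β μ n k j‖ ^ 2 / w' j)
      = ‖QkerUpper β μ n k j‖ ^ 2 * (w k / w' j) := by ring
    _ ≤ (M / c * ((max (j : ℝ) k + 1)⁻¹ * ‖μ j / μ k‖)) ^ 2 * (w k / w' j) := by gcongr
    _ = (M / c) ^ 2 * ((max (j : ℝ) k + 1)⁻¹ ^ 2 * ‖μ j / μ k‖ ^ 2 * (w k / w' j)) := by ring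

theorem statement4_general {w w' : ℕ → ℝ} (hw : ∀ k, 0 < w k) (hw' : ∀ k, 0 < w' k)
    (hβ : ∀ k, β k ≠ 0) (hμ : ∀ k, μ k ≠ 0) {n : ℕ}
    (hQ : IsHilbertSchmidtKernel w w' (QkerUpper β μ n)) :
    (∀ g : ℕ → ℂ, MemL2 w' g →
      (∀ k : ℕ, Summable fun j : ℕ => if k ≤ j then ‖Qker β μ n k j * g j‖ else 0) ∧
      (∀ k : ℕ, Dn β μ n (Qop β μ n g) k = g k) ∧
      MemL2 w (Qop β μ n g)) ∧
    (∀ g : ℕ → ℂ, MemL2 w' g → ∃ f : ℕ → ℂ, MemL2 w f ∧ Dn β μ n f = g) := by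
  have hrow (g : ℕ → ℂ) (hg : MemL2 w' g) (k : ℕ) :
      Summable fun j => ‖QkerUpper β μ n k j * g j‖ :=
    (hQ.summable_norm_mul_and_sq_tsum_le hw' hg (hw k).ne').1
  have hDQ (g : ℕ → ℂ) (hg : MemL2 w' g) : Dn β μ n (Qop β μ n g) = g :=
    Dn_Qop hβ hμ fun k => (hrow g hg k).of_norm
  have hmem (g : ℕ → ℂ) (hg : MemL2 w' g) : MemL2 w (Qop β μ n g) := by
    rw [Qop_eq_tsum_QkerUpper_mul]
    exact hQ.summable_mul_sq_norm_tsum hw hw' hg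
  refine ⟨fun g hg => ⟨fun k => ?_, congrFun (hDQ g hg), hmem g hg⟩,
    fun g hg => ⟨Qop β μ n g, hmem g hg, hDQ g hg⟩⟩
  simpa only [norm_QkerUpper_mul] using hrow g hg k

end QkerUpper

/-- under the hypotheses guaranteeing that `Q_n` is Hilbert–Schmidt,
for every `g ∈ ℓ²_{w'}` the series defining `Q_n g` converges absolutely at each `k`,
and `D_n Q_n g = g`, i.e.
`β(k+n)(Q_n g)(k) − β(k)(μ(k+1)/μ(k))(Q_n g)(k+1) = g(k)` for all `k`.
In particular `Ran(Q_n) ⊆ dom(D_n)` and `D_n : dom(D_n) → ℓ²_{w'}` is surjective. -/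
theorem statement4 (w w' : ℕ → ℝ) (hw : ∀ k, 0 < w k) (hw' : ∀ k, 0 < w' k)
    (β μ : ℕ → ℂ) (hβ : ∀ k, β k ≠ 0) (hμ : ∀ k, μ k ≠ 0) (hμ0 : μ 0 = 1)
    (M c : ℝ) (hc : 0 < c)
    (hM : ∀ k j m : ℕ, k ≤ j →
      ‖∏ i ∈ Finset.range (m + 1), β (k + i)‖ ≤
        M * ‖∏ i ∈ Finset.range (m + 1), β (j + i)‖)
    (hβlow : ∀ k : ℕ, c * (1 + k) ≤ ‖β k‖)
    (hsum : Summable fun p : ℕ × ℕ =>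
      ((max p.2 p.1 : ℝ) + 1)⁻¹ ^ 2 * ‖μ p.2 / μ p.1‖ ^ 2 * (w p.1 / w' p.2))
    (n : ℕ) :
    (∀ g : ℕ → ℂ, MemL2 w' g →
      (∀ k : ℕ, Summable fun j : ℕ => if k ≤ j then ‖Qker β μ n k j * g j‖ else 0) ∧
      (∀ k : ℕ, Dn β μ n (Qop β μ n g) k = g k) ∧
      MemL2 w (Qop β μ n g)) ∧
    (∀ g : ℕ → ℂ, MemL2 w' g → ∃ f : ℕ → ℂ, MemL2 w f ∧ Dn β μ n f = g) :=
  statement4_general hw hw' hβ hμ <|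
    isHilbertSchmidtKernel_QkerUpper (fun k => (hw k).le) (fun k => (hw' k).le) hβ hc
      (fun _ _ => norm_prod_shift_le hβ hM n) hβlow hsum
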